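/- Let ε > 0 and let N ≥ 2 and Q0 ≥ 2 be real numbers with Q0 > N^{1/4}. Let K denote the maximum, over q1 ∈ ℤ[i] with Q0/√2 < N(q1) ≤ Q0 and reduced residues r1 mod q1² with (r1,q1)=1, of the number of pairs (q2, r2) with q2 ∈ ℤ[i], Q0/√2 < N(q2) ≤ Q0, r2 a reduced residue mod q2² with (r2,q2)=1, and N(r1 q2² − r2 q1²) ≤ 2 N^{−1} N(q1)² N(q2)². Then K ≤ C(ε) · ( Q0³/N + (Q0 N)^ε · (Q0²/√N + Q0^{1/2}) ), where C(ε) depends only on ε. -/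

import Mathlib

noncomputable section

/-- The norm of a Gaussian integer, as a real number. -/
def gN (z : GaussianInt) : ℝ := (z.re : ℝ) ^ 2 + (z.im : ℝ) ^ 2

lemma gN_nonneg (z : GaussianInt) : 0 ≤ gN z := by unfold gN; positivity

lemma gN_mul (a b : GaussianInt) : gN (a * b) = gN a * gN b := by
  unfold gN
  simp only [Zsqrtd.re_mul, Zsqrtd.im_mul]
  push_cast
  ring

lemma gN_one : gN 1 = 1 := by simp [gN]

lemma gN_pow (a : GaussianInt) (k : ℕ) : gN (a ^ k) = gN a ^ k := by
  induction k with
  | zero => simp [gN_one]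
  | succ k ih => rw [pow_succ, pow_succ, gN_mul, ih]

lemma gN_sub (a b : GaussianInt) : gN (a - b) ≤ 2 * gN a + 2 * gN b := by
  unfold gN
  simp only [Zsqrtd.re_sub, Zsqrtd.im_sub]
  push_cast
  nlinarith [sq_nonneg ((a.re : ℝ) + b.re), sq_nonneg ((a.im : ℝ) + b.im)]

lemma gN_one_le {z : GaussianInt} (hz : z ≠ 0) : 1 ≤ gN z := by
  have h : 1 ≤ z.re ^ 2 + z.im ^ 2 := by
    by_contra hc
    have h1 : z.re ^ 2 = 0 := by nlinarith [sq_nonneg z.re, sq_nonneg z.im]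
    have h2 : z.im ^ 2 = 0 := by nlinarith [sq_nonneg z.re, sq_nonneg z.im]
    apply hz
    ext
    · simpa using h1
    · simpa using h2
  unfold gN
  exact_mod_cast h

lemma gN_zero : gN 0 = 0 := by simp [gN]

lemma gball_sub (R : ℝ) : {z : GaussianInt | gN z ≤ R} ⊆
    ((Finset.Icc (-⌊√R⌋) ⌊√R⌋ ×ˢ Finset.Icc (-⌊√R⌋) ⌊√R⌋).image
      (fun p : ℤ × ℤ => (⟨p.1, p.2⟩ : GaussianInt)) : Finset GaussianInt) := by
  intro z hz
  simp only [Set.mem_setOf_eq] at hz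
  unfold gN at hz
  have key : ∀ a : ℤ, (a : ℝ) ^ 2 ≤ R → -⌊√R⌋ ≤ a ∧ a ≤ ⌊√R⌋ := by
    intro a ha
    have h := Real.abs_le_sqrt ha
    have h2 : |a| ≤ ⌊√R⌋ := by
      rw [Int.le_floor]
      push_cast
      exact h
    exact abs_le.1 h2
  have h1 := key z.re (by nlinarith [sq_nonneg (z.im : ℝ)])
  have h2 := key z.im (by nlinarith [sq_nonneg (z.re : ℝ)])
  simp only [Finset.coe_image, Set.mem_image, Finset.mem_coe, Finset.mem_product, Finset.mem_Icc]
  exact ⟨(z.re, z.im), ⟨h1, h2⟩, rfl⟩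

lemma ball_finite (R : ℝ) : {z : GaussianInt | gN z ≤ R}.Finite :=
  (Finset.finite_toSet _).subset (gball_sub R)

lemma card_ball {R : ℝ} (hR : 0 ≤ R) (A : Finset GaussianInt) (hA : ∀ z ∈ A, gN z ≤ R) :
    (A.card : ℝ) ≤ 9 * (R + 1) := by
  have h1 : A ⊆ ((Finset.Icc (-⌊√R⌋) ⌊√R⌋ ×ˢ Finset.Icc (-⌊√R⌋) ⌊√R⌋).image
      (fun p : ℤ × ℤ => (⟨p.1, p.2⟩ : GaussianInt))) := by
    intro z hz
    exact_mod_cast gball_sub R (hA z hz)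
  have h2 := (Finset.card_le_card h1).trans Finset.card_image_le
  rw [Finset.card_product, Int.card_Icc] at h2
  have h0 : 0 ≤ ⌊√R⌋ := Int.floor_nonneg.2 (Real.sqrt_nonneg R)
  have h3 : (A.card : ℤ) ≤ (2 * ⌊√R⌋ + 1) * (2 * ⌊√R⌋ + 1) := by
    have : ((⌊√R⌋ + 1 - -⌊√R⌋).toNat : ℤ) = 2 * ⌊√R⌋ + 1 := by omega
    rw [← this]
    exact_mod_cast h2
  have h4 : (A.card : ℝ) ≤ (2 * ⌊√R⌋ + 1) * (2 * ⌊√R⌋ + 1) := by exact_mod_cast h3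
  have h5 : (⌊√R⌋ : ℝ) ≤ √R := Int.floor_le _
  have h6 : (0 : ℝ) ≤ ⌊√R⌋ := by exact_mod_cast h0
  have h7 := Real.sq_sqrt hR
  nlinarith [sq_nonneg (√R - 1), Real.sqrt_nonneg R]

lemma card_class {R : ℝ} (hR : 0 ≤ R) {g : GaussianInt} (hg : g ≠ 0) (A : Finset GaussianInt)
    (hA : ∀ z ∈ A, gN z ≤ R) (hd : ∀ z ∈ A, ∀ w ∈ A, g ∣ z - w) :
    (A.card : ℝ) ≤ 9 * (4 * R / gN g + 1) := by
  have hgp : 0 < gN g := lt_of_lt_of_le one_pos (gN_one_le hg)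
  rcases A.eq_empty_or_nonempty with rfl | ⟨w, hw⟩
  · simp only [Finset.card_empty, Nat.cast_zero]; positivity
  choose! f hf using fun z hz => hd z hz w hw
  have hinj : Set.InjOn f A := by
    intro a ha b hb hab
    have h1 := hf a ha
    have h2 := hf b hb
    rw [hab, ← h2] at h1
    exact sub_left_injective h1
  have := Finset.card_image_of_injOn hinj
  rw [← this]
  apply card_ball (by positivity)
  intro t ht
  obtain ⟨z, hz, rfl⟩ := Finset.mem_image.1 ht
  have h1 : gN g * gN (f z) ≤ 4 * R := by
    rw [← gN_mul, ← hf z hz]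
    linarith [gN_sub z w, hA z hz, hA w hw]
  rw [le_div_iff₀ hgp]
  linarith

/-- divisor count -/
def dv (x : GaussianInt) : ℕ := Set.ncard {a : GaussianInt | a ∣ x}

lemma gN_dvd {a x : GaussianInt} (hx : x ≠ 0) (h : a ∣ x) : gN a ≤ gN x := by
  obtain ⟨b, rfl⟩ := h
  rw [gN_mul]
  have := gN_one_le (right_ne_zero_of_mul hx)
  nlinarith [gN_nonneg a]

lemma dv_fin {x : GaussianInt} (hx : x ≠ 0) : {a : GaussianInt | a ∣ x}.Finite :=
  (ball_finite (gN x)).subset (fun _ ha => gN_dvd hx ha)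

lemma dv_mul {x y : GaussianInt} (hx : x ≠ 0) (hy : y ≠ 0) : dv (x * y) ≤ dv x * dv y := by
  unfold dv
  rw [← Set.ncard_prod]
  have hsub : {a : GaussianInt | a ∣ x * y} ⊆
      (fun p : GaussianInt × GaussianInt => p.1 * p.2) '' ({a | a ∣ x} ×ˢ {a | a ∣ y}) := by
    intro a ha
    obtain ⟨b, c, hb, hc, rfl⟩ := exists_dvd_and_dvd_of_dvd_mul ha
    exact ⟨(b, c), ⟨hb, hc⟩, rfl⟩
  have hf := (dv_fin hx).prod (dv_fin hy)
  exact (Set.ncard_le_ncard hsub (hf.image _)).trans (Set.ncard_image_le hf)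

lemma dv_unit {u : GaussianInt} (hu : IsUnit u) : dv u ≤ 18 := by
  have h1 : gN u = 1 := by
    obtain ⟨v, hv⟩ := hu.exists_right_inv
    have h := gN_mul u v
    rw [hv, gN_one] at h
    have hu0 : u ≠ 0 := hu.ne_zero
    have hv0 : v ≠ 0 := by rintro rfl; simp at hv
    nlinarith [gN_one_le hu0, gN_one_le hv0]
  have := card_ball (R := 1) (by norm_num) (dv_fin hu.ne_zero).toFinset (by
    intro z hz
    rw [← h1]
    exact gN_dvd hu.ne_zero (by simpa using hz))
  unfold dv
  rw [Set.ncard_eq_toFinset_card _ (dv_fin hu.ne_zero)]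
  norm_num at this
  exact_mod_cast this

lemma dv_prime {p : GaussianInt} (hp : Prime p) {x : GaussianInt} (hx : x ≠ 0) :
    dv (p * x) ≤ 2 * dv x := by
  unfold dv
  have hsub : {a : GaussianInt | a ∣ p * x} ⊆ {a | a ∣ x} ∪ (fun a => p * a) '' {a | a ∣ x} := by
    intro a ha
    by_cases hpa : p ∣ a
    · obtain ⟨b, rfl⟩ := hpa
      right
      exact ⟨b, (mul_dvd_mul_iff_left hp.ne_zero).1 ha, rfl⟩
    · left
      obtain ⟨c, hc⟩ := ha
      have : p ∣ c := by
        rcases hp.dvd_or_dvd (⟨x, hc.symm⟩ : p ∣ a * c) with h | h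
        · exact absurd h hpa
        · exact h
      obtain ⟨d, rfl⟩ := this
      refine ⟨d, mul_left_cancel₀ hp.ne_zero ?_⟩
      rw [hc]; ring
  have hf := dv_fin hx
  have h1 := Set.ncard_le_ncard hsub (hf.union (hf.image _))
  have h2 := Set.ncard_union_le {a : GaussianInt | a ∣ x} ((fun a => p * a) '' {a | a ∣ x})
  have h3 := Set.ncard_image_le (f := fun a => p * a) hf
  omega

lemma dv_prime_pow {p : GaussianInt} (hp : Prime p) (k : ℕ) :
    dv (p ^ k) ≤ 18 * (k + 1) := by
  have h1 : {a : GaussianInt | a ∣ p ^ k} ⊆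
     (fun q : GaussianInt × ℕ => q.1 * p ^ q.2) '' ({a | a ∣ 1} ×ˢ (Finset.range (k+1) : Set ℕ)) := by
    intro a ha
    obtain ⟨i, hi, hu⟩ := (dvd_prime_pow hp k).1 ha
    obtain ⟨u, hu⟩ := hu.symm
    refine ⟨(u, i), ⟨isUnit_iff_dvd_one.1 u.isUnit, by simpa using Nat.lt_succ_of_le hi⟩, ?_⟩
    simp only [← hu]; ring
  have hf : ({a : GaussianInt | a ∣ 1} ×ˢ (Finset.range (k+1) : Set ℕ)).Finite :=
    (dv_fin one_ne_zero).prod (Finset.finite_toSet _)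
  have h2 := (Set.ncard_le_ncard h1 (hf.image _)).trans (Set.ncard_image_le hf)
  rw [Set.ncard_prod, Set.ncard_coe_finset, Finset.card_range] at h2
  exact h2.trans (Nat.mul_le_mul_right _ (dv_unit isUnit_one))

lemma lin_exp {ε : ℝ} (hε : 0 < ε) : ∃ C : ℝ, 0 < C ∧ ∀ k : ℕ, ∀ t : ℝ, 2 ≤ t →
    (18 * (k + 1) : ℝ) ≤ C * (t ^ k) ^ ε := by
  have hl : 0 < Real.log 2 := Real.log_pos (by norm_num)
  refine ⟨18 * (1 + 1 / (ε * Real.log 2)), by positivity, fun k t ht => ?_⟩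
  have h1 : ((2 : ℝ) ^ k) ^ ε ≤ (t ^ k) ^ ε :=
    Real.rpow_le_rpow (by positivity) (pow_le_pow_left₀ (by norm_num) ht k) hε.le
  have h2 : 1 + (k : ℝ) * (ε * Real.log 2) ≤ ((2 : ℝ) ^ k) ^ ε := by
    rw [Real.rpow_def_of_pos (by positivity), Real.log_pow]
    have := Real.add_one_le_exp ((k : ℝ) * Real.log 2 * ε)
    linarith
  have h3 : (k : ℝ) + 1 ≤ (1 + 1 / (ε * Real.log 2)) * (1 + (k : ℝ) * (ε * Real.log 2)) := by
    have he : 0 < ε * Real.log 2 := by positivity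
    generalize ε * Real.log 2 = c at *
    have : (1 + 1 / c) * (1 + (k : ℝ) * c) = 1 + k * c + 1 / c + k := by field_simp; ring
    rw [this]
    have : 0 ≤ k * c + 1 / c := by positivity
    linarith
  have hc : 0 < 1 + 1 / (ε * Real.log 2) := by positivity
  nlinarith [mul_le_mul_of_nonneg_left (h2.trans h1) hc.le]

lemma prime_gN {p : GaussianInt} (hp : Prime p) : 2 ≤ gN p := by
  have h1 := gN_one_le hp.ne_zero
  by_contra hc
  apply hp.not_unit
  have e : gN p = ((p.re ^ 2 + p.im ^ 2 : ℤ) : ℝ) := by unfold gN; push_cast; ring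
  rw [e] at h1 hc
  have h2 : p.re ^ 2 + p.im ^ 2 = 1 := by
    have a : 1 ≤ p.re ^ 2 + p.im ^ 2 := by exact_mod_cast h1
    have b : p.re ^ 2 + p.im ^ 2 < 2 := by exact_mod_cast not_le.1 hc
    omega
  refine IsUnit.of_mul_eq_one (star p) ?_
  ext
  · simp; linarith
  · simp; ring

lemma dv_aux {ε : ℝ} (hε : 0 < ε) (P : Finset GaussianInt) : ∃ C : ℝ, 0 < C ∧
    ∀ x : GaussianInt, x ≠ 0 → (∀ p, Prime p → p ∣ x → p ∈ P ∨ 2 ≤ gN p ^ ε) →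
      (dv x : ℝ) ≤ C * gN x ^ ε := by
  classical
  induction P using Finset.induction_on with
  | empty =>
    refine ⟨18, by norm_num, fun x => ?_⟩
    induction x using UniqueFactorizationMonoid.induction_on_prime with
    | h₁ => intro h; exact absurd rfl h
    | h₂ x hx =>
      intro h0 _
      have h1 : (dv x : ℝ) ≤ 18 := by exact_mod_cast dv_unit hx
      have := Real.one_le_rpow (gN_one_le h0) hε.le
      linarith
    | h₃ a p ha hp ih =>
      intro h0 h
      have h1 := ih ha (fun r hr hra => h r hr (hra.mul_left p))
      have h2 := (h p hp (dvd_mul_right p a)).resolve_left (by simp)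
      have h3 : (dv (p * a) : ℝ) ≤ 2 * dv a := by exact_mod_cast dv_prime hp ha
      rw [gN_mul, Real.mul_rpow (gN_nonneg _) (gN_nonneg _)]
      have h4 : 0 ≤ gN a ^ ε := Real.rpow_nonneg (gN_nonneg _) _
      nlinarith
  | insert π P hπ ih =>
    obtain ⟨C, hC, ih⟩ := ih
    obtain ⟨C', hC', hl⟩ := lin_exp hε
    by_cases hp : Prime π
    · refine ⟨C' * C, by positivity, fun x hx h => ?_⟩
      obtain ⟨k, y, hy, rfl⟩ := WfDvdMonoid.max_power_factor hx hp.irreducible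
      have hy0 := right_ne_zero_of_mul hx
      have h1 := ih y hy0 (fun p hpp hpy => by
        rcases h p hpp (hpy.mul_left _) with h | h
        · rcases Finset.mem_insert.1 h with rfl | h
          · exact absurd hpy hy
          · exact Or.inl h
        · exact Or.inr h)
      have h2 : (dv (π ^ k * y) : ℝ) ≤ dv (π ^ k) * dv y := by
        exact_mod_cast dv_mul (left_ne_zero_of_mul hx) hy0
      have h3 : (dv (π ^ k) : ℝ) ≤ 18 * (k + 1) := by exact_mod_cast dv_prime_pow hp k
      have h4 := h3.trans (hl k (gN π) (prime_gN hp))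
      rw [gN_mul, Real.mul_rpow (gN_nonneg _) (gN_nonneg _), gN_pow]
      calc _ ≤ _ := h2
        _ ≤ (C' * (gN π ^ k) ^ ε) * (C * gN y ^ ε) :=
            mul_le_mul h4 h1 (by positivity) (le_trans (by positivity) h4)
        _ = _ := by ring
    · refine ⟨C, hC, fun x hx h => ih x hx (fun p hpp hpx => ?_)⟩
      rcases h p hpp hpx with h | h
      · rcases Finset.mem_insert.1 h with rfl | h
        · exact absurd hpp hp
        · exact Or.inl h
      · exact Or.inr h

lemma dv_bound {ε : ℝ} (hε : 0 < ε) : ∃ C : ℝ, 0 < C ∧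
    ∀ x : GaussianInt, x ≠ 0 → (dv x : ℝ) ≤ C * gN x ^ ε := by
  obtain ⟨C, hC, h⟩ := dv_aux hε (ball_finite ((2 : ℝ) ^ (1 / ε))).toFinset
  refine ⟨C, hC, fun x hx => h x hx (fun p _ _ => ?_)⟩
  by_cases hp : gN p ≤ (2 : ℝ) ^ (1 / ε)
  · left; simpa using hp
  · right
    have := Real.rpow_le_rpow (by positivity) (not_le.1 hp).le hε.le
    rwa [← Real.rpow_mul (by norm_num), one_div_mul_cancel hε.ne', Real.rpow_one] at this

lemma fiber_le {x : GaussianInt} (hx : x ≠ 0) (A : Finset (GaussianInt × GaussianInt))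
    (hA : ∀ p ∈ A, p.1 ^ 2 - p.2 ^ 2 = x) : A.card ≤ dv x := by
  unfold dv
  have h1 : A.card ≤ (dv_fin hx).toFinset.card := by
    apply Finset.card_le_card_of_injOn (fun p => p.1 - p.2)
    · intro p hp
      simp only [Set.Finite.coe_toFinset]
      exact ⟨p.1 + p.2, by rw [← hA p hp]; ring⟩
    · intro p hp q hq hpq
      simp only at hpq
      have h1 := hA p hp
      have h2 := hA q hq
      have hne : p.1 - p.2 ≠ 0 := by
        intro h
        apply hx
        rw [← h1, show p.1 ^ 2 - p.2 ^ 2 = (p.1 - p.2) * (p.1 + p.2) by ring, h, zero_mul]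
      have h3 : p.1 + p.2 = q.1 + q.2 := by
        apply mul_left_cancel₀ hne
        rw [show (p.1 - p.2) * (p.1 + p.2) = p.1 ^ 2 - p.2 ^ 2 by ring, h1, hpq, ← h2]
        ring
      have two : (2 : GaussianInt) ≠ 0 := two_ne_zero
      have e1 : p.1 = q.1 := mul_left_cancel₀ two (by linear_combination h3 + hpq)
      have e2 : p.2 = q.2 := mul_left_cancel₀ two (by linear_combination h3 - hpq)
      exact Prod.ext e1 e2
  rwa [Set.ncard_eq_toFinset_card _ (dv_fin hx)]

lemma count_q {Q M D ε : ℝ} (hQ : 1 ≤ Q) (hM : 1 ≤ M) (hD : 1 ≤ D) (hε : 0 < ε)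
    (hdv : ∀ x : GaussianInt, x ≠ 0 → (dv x : ℝ) ≤ D * gN x ^ ε)
    {g r : GaussianInt} (hg : g ≠ 0) (hgQ : Q ^ 2 ≤ 2 * gN g) (hr : IsCoprime r g)
    (S : Finset GaussianInt) (hS : ∀ q ∈ S, gN q ≤ Q)
    (hS' : ∀ q ∈ S, ∃ m, gN m ≤ M ∧ g ∣ r * q ^ 2 - m) :
    (S.card : ℝ) ^ 2 ≤ 4 * (D * (4 * Q ^ 2) ^ ε * (297 * (45 * M))) := by
  classical
  have hgp : 0 < gN g := lt_of_lt_of_le one_pos (gN_one_le hg)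
  let f : GaussianInt × GaussianInt → GaussianInt := fun p => p.1 ^ 2 - p.2 ^ 2
  have hsplit := Finset.card_filter_add_card_filter_not (s := S ×ˢ S) (fun p => f p = 0)
  rw [Finset.card_product] at hsplit
  have h0 : ((S ×ˢ S).filter (fun p => f p = 0)).card ≤ 2 * S.card := by
    have hsub : (S ×ˢ S).filter (fun p => f p = 0) ⊆
        S.image (fun q => (q, q)) ∪ S.image (fun q => (q, -q)) := by
      rintro ⟨a, b⟩ hp
      simp only [Finset.mem_filter, Finset.mem_product, f] at hp
      obtain ⟨⟨ha, hb⟩, h⟩ := hp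
      simp only [Finset.mem_union, Finset.mem_image, Prod.mk.injEq]
      rcases sq_eq_sq_iff_eq_or_eq_neg.1 (sub_eq_zero.1 h) with h | h
      · left; exact ⟨a, ha, rfl, h⟩
      · right; exact ⟨a, ha, rfl, by rw [h, neg_neg]⟩
    have h1 := Finset.card_le_card hsub
    have h2 := Finset.card_union_le (S.image (fun q => (q, q))) (S.image (fun q => (q, -q)))
    have h3 := Finset.card_image_le (s := S) (f := fun q => (q, q))
    have h4 := Finset.card_image_le (s := S) (f := fun q => (q, -q))
    omega
  set T := (S ×ˢ S).filter (fun p => ¬ f p = 0) with hT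
  set X := T.image f with hX
  have hX1 : ∀ x ∈ X, x ≠ 0 ∧ gN x ≤ 4 * Q ^ 2 ∧ ∃ n, gN n ≤ 4 * M ∧ g ∣ r * x - n := by
    intro x hx
    obtain ⟨⟨a, b⟩, hp, rfl⟩ := Finset.mem_image.1 hx
    rw [hT, Finset.mem_filter, Finset.mem_product] at hp
    obtain ⟨⟨ha, hb⟩, h⟩ := hp
    refine ⟨h, ?_, ?_⟩
    · have h1 := gN_sub (a ^ 2) (b ^ 2)
      rw [gN_pow, gN_pow] at h1
      have h2 := pow_le_pow_left₀ (gN_nonneg a) (hS a ha) 2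
      have h3 := pow_le_pow_left₀ (gN_nonneg b) (hS b hb) 2
      simp only [f]
      linarith
    · obtain ⟨m, hm, hm'⟩ := hS' a ha
      obtain ⟨n, hn, hn'⟩ := hS' b hb
      refine ⟨m - n, by linarith [gN_sub m n], ?_⟩
      have := dvd_sub hm' hn'
      simp only [f]
      convert this using 1
      ring
  have hXc : (X.card : ℝ) ≤ 297 * (45 * M) := by
    choose! ν hν using fun x hx => (hX1 x hx).2.2
    have h1 := Finset.card_le_mul_card_image (f := ν) X 297 (by
      intro a _
      have := card_class (R := 4 * Q ^ 2) (by positivity) hg (X.filter (fun x => ν x = a))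
        (fun z hz => (hX1 z (Finset.mem_filter.1 hz).1).2.1) (by
          intro z hz w hw
          rw [Finset.mem_filter] at hz hw
          have h1 := (hν z hz.1).2
          have h2 := (hν w hw.1).2
          rw [hz.2] at h1
          rw [hw.2] at h2
          have h3 : g ∣ r * (z - w) := by
            have := dvd_sub h1 h2
            convert this using 1
            ring
          exact hr.symm.dvd_of_dvd_mul_left h3)
      have h2 : 4 * (4 * Q ^ 2) / gN g ≤ 32 := by
        rw [div_le_iff₀ hgp]; linarith
      have h3 : ((X.filter (fun x => ν x = a)).card : ℝ) ≤ 297 := by linarith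
      exact_mod_cast h3)
    have h2 := card_ball (R := 4 * M) (by linarith) (X.image ν) (by
      intro z hz
      obtain ⟨x, hx, rfl⟩ := Finset.mem_image.1 hz
      exact (hν x hx).1)
    have h3 : (X.card : ℝ) ≤ 297 * ((X.image ν).card : ℝ) := by exact_mod_cast h1
    linarith
  have hpos : 1 ≤ (4 * Q ^ 2) ^ ε := Real.one_le_rpow (by nlinarith) hε.le
  have hDp : 1 ≤ D * (4 * Q ^ 2) ^ ε := by nlinarith
  have hTc : (T.card : ℝ) ≤ D * (4 * Q ^ 2) ^ ε * (297 * (45 * M)) := by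
    have h1 := Finset.card_le_mul_card_image (f := f) T ⌊D * (4 * Q ^ 2) ^ ε⌋₊ (by
      intro x hx
      obtain ⟨hx0, hxQ, -⟩ := hX1 x hx
      apply Nat.le_floor
      have h1 := fiber_le hx0 (T.filter (fun p => f p = x)) (fun p hp => (Finset.mem_filter.1 hp).2)
      have h2 : ((T.filter (fun p => f p = x)).card : ℝ) ≤ dv x := by exact_mod_cast h1
      refine h2.trans ((hdv x hx0).trans ?_)
      have := Real.rpow_le_rpow (gN_nonneg x) hxQ hε.le
      nlinarith)
    have h2 : (T.card : ℝ) ≤ (⌊D * (4 * Q ^ 2) ^ ε⌋₊ : ℝ) * (X.card : ℝ) := by exact_mod_cast h1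
    have h3 := Nat.floor_le (show 0 ≤ D * (4 * Q ^ 2) ^ ε by linarith)
    exact h2.trans (mul_le_mul h3 hXc (by positivity) (by linarith))
  set B := D * (4 * Q ^ 2) ^ ε * (297 * (45 * M)) with hB
  have hB1 : 1 ≤ B := by nlinarith
  have hm : (S.card : ℝ) ^ 2 ≤ 2 * S.card + B := by
    have h1 : S.card * S.card ≤ 2 * S.card + T.card := by omega
    have h2 : (S.card : ℝ) * S.card ≤ 2 * S.card + T.card := by exact_mod_cast h1
    nlinarith
  rcases le_or_gt S.card 2 with h | h
  · have : (S.card : ℝ) ≤ 2 := by exact_mod_cast h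
    nlinarith [(Nat.cast_nonneg S.card : (0 : ℝ) ≤ S.card)]
  · have : (3 : ℝ) ≤ S.card := by exact_mod_cast h
    nlinarith

lemma count_qm {Q M D ε : ℝ} (hQ : 2 ≤ Q) (hM : 1 ≤ M) (hD : 1 ≤ D) (hε : 0 < ε)
    (hdv : ∀ x : GaussianInt, x ≠ 0 → (dv x : ℝ) ≤ D * gN x ^ ε)
    {g r : GaussianInt} (hg : g ≠ 0) (hgQ : Q ^ 2 ≤ 2 * gN g) (hr : IsCoprime r g)
    (T : Finset (GaussianInt × GaussianInt))
    (hT : ∀ p ∈ T, gN p.1 ≤ Q ∧ gN p.2 ≤ M ∧ g ∣ r * p.1 ^ 2 - p.2) :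
    (T.card : ℝ) ≤ 1134 * (M / Q) +
      81 * √(4 * (D * (4 * Q ^ 2) ^ ε * (297 * (45 * M)))) := by
  classical
  have hgp : 0 < gN g := lt_of_lt_of_le one_pos (gN_one_le hg)
  set S := T.image Prod.fst with hS
  have hS1 : ∀ q ∈ S, gN q ≤ Q ∧ ∃ m, gN m ≤ M ∧ g ∣ r * q ^ 2 - m := by
    intro q hq
    obtain ⟨p, hp, rfl⟩ := Finset.mem_image.1 hq
    exact ⟨(hT p hp).1, p.2, (hT p hp).2⟩
  have hfib : ∀ q, ((T.filter (fun p => p.1 = q)).card : ℝ) ≤ 9 * (8 * M / Q ^ 2 + 1) := by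
    intro q
    have hinj : Set.InjOn Prod.snd (T.filter (fun p => p.1 = q) : Set (GaussianInt × GaussianInt)) := by
      intro a ha b hb hab
      simp only [Finset.coe_filter, Set.mem_ofPred_eq] at ha hb
      exact Prod.ext (ha.2.trans hb.2.symm) hab
    rw [← Finset.card_image_of_injOn hinj]
    refine (card_class (R := M) (by linarith) hg _ ?_ ?_).trans ?_
    · intro z hz
      obtain ⟨p, hp, rfl⟩ := Finset.mem_image.1 hz
      exact (hT p (Finset.mem_filter.1 hp).1).2.1
    · intro z hz w hw
      obtain ⟨p, hp, rfl⟩ := Finset.mem_image.1 hz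
      obtain ⟨p', hp', rfl⟩ := Finset.mem_image.1 hw
      rw [Finset.mem_filter] at hp hp'
      have h1 := (hT p hp.1).2.2
      have h2 := (hT p' hp'.1).2.2
      rw [hp.2] at h1
      rw [hp'.2] at h2
      have := dvd_sub h2 h1
      convert this using 1
      ring
    · have : 4 * M / gN g ≤ 8 * M / Q ^ 2 := by
        rw [div_le_div_iff₀ hgp (by positivity)]
        nlinarith
      linarith
  have hcard : (T.card : ℝ) ≤ 9 * (8 * M / Q ^ 2 + 1) * S.card := by
    have h1 := Finset.card_eq_sum_card_image Prod.fst T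
    rw [h1]
    push_cast
    refine (Finset.sum_le_sum (fun q _ => hfib q)).trans ?_
    rw [Finset.sum_const, nsmul_eq_mul, mul_comm]
  have hsq := Real.sqrt_nonneg (4 * (D * (4 * Q ^ 2) ^ ε * (297 * (45 * M))))
  have hMQ : 0 ≤ M / Q := by positivity
  rcases le_or_gt (Q ^ 2) M with h | h
  · have h1 := card_ball (by linarith) S (fun q hq => (hS1 q hq).1)
    have h2 : 1 ≤ M / Q ^ 2 := by rwa [one_le_div (by positivity)]
    have h3 : 9 * (8 * M / Q ^ 2 + 1) ≤ 81 * (M / Q ^ 2) := by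
      rw [mul_div_assoc]; linarith
    have h4 : (S.card : ℝ) ≤ 14 * Q := by linarith
    have h5 : (T.card : ℝ) ≤ 81 * (M / Q ^ 2) * (14 * Q) :=
      hcard.trans (mul_le_mul h3 h4 (by positivity) (by positivity))
    have h6 : 81 * (M / Q ^ 2) * (14 * Q) = 1134 * (M / Q) := by field_simp; norm_num
    linarith
  · have h1 := count_q (by linarith) hM hD hε hdv hg hgQ hr S (fun q hq => (hS1 q hq).1)
      (fun q hq => (hS1 q hq).2)
    have h2 := Real.le_sqrt_of_sq_le h1
    have h3 : 9 * (8 * M / Q ^ 2 + 1) ≤ 81 := by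
      have : M / Q ^ 2 ≤ 1 := by rw [div_le_one (by positivity)]; exact h.le
      rw [mul_div_assoc]; linarith
    have h5 : (T.card : ℝ) ≤ 81 * _ := hcard.trans (mul_le_mul h3 h2 (by positivity) (by positivity))
    linarith

/-- **Final bound for the counting quantity in the square-moduli case** (inequality (32)
of the paper). For `ε > 0` there is `C(ε)` such that for all `N, Q₀ ≥ 2` with
`Q₀ > N^{1/4}` and any fixed system `rep` of representatives of invertible residues mod
`q²`, the counting quantity `K` satisfies
`K ≤ C(ε) (Q₀³/N + (Q₀N)^ε (Q₀²/√N + Q₀^{1/2}))`. -/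
theorem final_counting_bound_square :
    ∀ ε : ℝ, 0 < ε → ∃ C : ℝ, 0 < C ∧
      ∀ (N Q0 : ℝ), 2 ≤ N → 2 ≤ Q0 → N ^ ((1 : ℝ) / 4) < Q0 →
      ∀ rep : (q : GaussianInt) → (GaussianInt ⧸ Ideal.span {q ^ 2})ˣ → GaussianInt,
      (∀ (q : GaussianInt) (u : (GaussianInt ⧸ Ideal.span {q ^ 2})ˣ),
        Ideal.Quotient.mk (Ideal.span {q ^ 2}) (rep q u)
          = (u : GaussianInt ⧸ Ideal.span {q ^ 2})) →
      ∀ K : ℕ,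
      K = sSup {m : ℕ | ∃ q1 : GaussianInt,
            (Q0 / Real.sqrt 2 < gN q1 ∧ gN q1 ≤ Q0) ∧
            ∃ u1 : (GaussianInt ⧸ Ideal.span {q1 ^ 2})ˣ,
              m = Nat.card {p : Σ q2 : GaussianInt, (GaussianInt ⧸ Ideal.span {q2 ^ 2})ˣ //
                    Q0 / Real.sqrt 2 < gN p.1 ∧ gN p.1 ≤ Q0 ∧
                    gN (rep q1 u1 * p.1 ^ 2 - rep p.1 p.2 * q1 ^ 2)
                      ≤ 2 * N⁻¹ * (gN q1) ^ 2 * (gN p.1) ^ 2}} →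
      (K : ℝ) ≤ C * (Q0 ^ 3 / N
          + (Q0 * N) ^ ε * (Q0 ^ 2 / Real.sqrt N + Q0 ^ ((1 : ℝ) / 2))) := by
  intro ε hε
  obtain ⟨D0, hD0, hdv0⟩ := dv_bound hε
  set D := max D0 1 with hDdef
  have hD : 1 ≤ D := le_max_right _ _
  have hdv : ∀ x : GaussianInt, x ≠ 0 → (dv x : ℝ) ≤ D * gN x ^ ε := fun x hx =>
    (hdv0 x hx).trans (mul_le_mul_of_nonneg_right (le_max_left _ _)
      (Real.rpow_nonneg (gN_nonneg x) _))
  set E := √(4 * (D * (4 : ℝ) ^ ε * (297 * (45 * 2)))) with hE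
  refine ⟨2268 + 81 * E, by positivity, ?_⟩
  intro N Q0 hN hQ hNQ rep hrep K hK
  have hN0 : 0 < N := by linarith
  have hQ0 : 0 < Q0 := by linarith
  set M := 2 * Q0 ^ 4 / N with hMdef
  have hNQ4 : N < Q0 ^ 4 := by
    have h := pow_lt_pow_left₀ hNQ (by positivity) (n := 4) (by norm_num)
    rwa [← Real.rpow_natCast, ← Real.rpow_mul hN0.le, show (1 : ℝ) / 4 * ((4 : ℕ) : ℝ) = 1 by norm_num,
      Real.rpow_one] at h
  have hM : 1 ≤ M := by rw [hMdef, one_le_div hN0]; linarith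
  have hbd : ∀ m ∈ {m : ℕ | ∃ q1 : GaussianInt,
            (Q0 / Real.sqrt 2 < gN q1 ∧ gN q1 ≤ Q0) ∧
            ∃ u1 : (GaussianInt ⧸ Ideal.span {q1 ^ 2})ˣ,
              m = Nat.card {p : Σ q2 : GaussianInt, (GaussianInt ⧸ Ideal.span {q2 ^ 2})ˣ //
                    Q0 / Real.sqrt 2 < gN p.1 ∧ gN p.1 ≤ Q0 ∧
                    gN (rep q1 u1 * p.1 ^ 2 - rep p.1 p.2 * q1 ^ 2)
                      ≤ 2 * N⁻¹ * (gN q1) ^ 2 * (gN p.1) ^ 2}},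
      (m : ℝ) ≤ 1134 * (M / Q0) +
      81 * √(4 * (D * (4 * Q0 ^ 2) ^ ε * (297 * (45 * M)))) := by
    rintro m ⟨q1, ⟨hq1, hq1'⟩, u1, rfl⟩
    have hs2 : 0 < Q0 / √2 := by positivity
    have hq0 : q1 ≠ 0 := by
      rintro rfl
      rw [gN_zero] at hq1
      linarith
    have hg : q1 ^ 2 ≠ 0 := pow_ne_zero 2 hq0
    have hgQ : Q0 ^ 2 ≤ 2 * gN (q1 ^ 2) := by
      rw [gN_pow]
      have := pow_le_pow_left₀ hs2.le hq1.le 2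
      rw [div_pow, Real.sq_sqrt (by norm_num)] at this
      linarith
    have hr : IsCoprime (rep q1 u1) (q1 ^ 2) := by
      obtain ⟨v, hv⟩ := Ideal.Quotient.mk_surjective (I := Ideal.span {q1 ^ 2}) ((u1⁻¹ : _ˣ) : _)
      have h1 : Ideal.Quotient.mk (Ideal.span {q1 ^ 2}) (rep q1 u1 * v) =
          Ideal.Quotient.mk (Ideal.span {q1 ^ 2}) 1 := by
        rw [map_mul, hrep, hv, map_one, Units.mul_inv]
      rw [Ideal.Quotient.eq, Ideal.mem_span_singleton] at h1
      obtain ⟨c, hc⟩ := h1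
      exact ⟨v, -c, by linear_combination hc⟩
    have hfin : {p : GaussianInt × GaussianInt |
        gN p.1 ≤ Q0 ∧ gN p.2 ≤ M ∧ q1 ^ 2 ∣ rep q1 u1 * p.1 ^ 2 - p.2}.Finite :=
      ((ball_finite Q0).prod (ball_finite M)).subset (fun p hp => ⟨hp.1, hp.2.1⟩)
    refine le_trans ?_ (count_qm hQ hM hD hε hdv hg hgQ hr hfin.toFinset
      (fun p hp => by simpa using hp))
    have hcard := Nat.card_le_card_of_injective
      (β := hfin.toFinset)
      (fun p : {p : Σ q2 : GaussianInt, (GaussianInt ⧸ Ideal.span {q2 ^ 2})ˣ //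
                    Q0 / Real.sqrt 2 < gN p.1 ∧ gN p.1 ≤ Q0 ∧
                    gN (rep q1 u1 * p.1 ^ 2 - rep p.1 p.2 * q1 ^ 2)
                      ≤ 2 * N⁻¹ * (gN q1) ^ 2 * (gN p.1) ^ 2} =>
        (⟨(p.1.1, rep q1 u1 * p.1.1 ^ 2 - rep p.1.1 p.1.2 * q1 ^ 2), by
          obtain ⟨⟨q, u⟩, h1, h2, h3⟩ := p
          simp only [Set.Finite.mem_toFinset]
          refine ⟨h2, h3.trans ?_, ⟨rep q u, by ring⟩⟩
          have e1 := pow_le_pow_left₀ (gN_nonneg q1) hq1' 2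
          have e2 := pow_le_pow_left₀ (gN_nonneg q) h2 2
          have e3 := mul_le_mul e1 e2 (by positivity) (by positivity)
          have e4 : M = 2 * N⁻¹ * (Q0 ^ 2 * Q0 ^ 2) := by rw [hMdef]; field_simp
          rw [e4, mul_assoc]
          exact mul_le_mul_of_nonneg_left e3 (by positivity)⟩ : hfin.toFinset)) (by
        rintro ⟨⟨q, u⟩, h⟩ ⟨⟨q', u'⟩, h'⟩ he
        simp only [Subtype.mk.injEq, Prod.mk.injEq] at he
        obtain ⟨rfl, he⟩ := he
        have h1 : rep q u = rep q u' := by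
          apply mul_right_cancel₀ hg
          linear_combination -he
        have h2 : u = u' := by
          apply Units.ext
          rw [← hrep, ← hrep, h1]
        subst h2
        rfl)
    rw [Nat.card_eq_fintype_card (α := hfin.toFinset), Fintype.card_coe] at hcard
    exact_mod_cast hcard
  have hKb : (K : ℝ) ≤ 1134 * (M / Q0) +
      81 * √(4 * (D * (4 * Q0 ^ 2) ^ ε * (297 * (45 * M)))) := by
    rw [hK]
    generalize hA : {m : ℕ | ∃ q1 : GaussianInt,
            (Q0 / Real.sqrt 2 < gN q1 ∧ gN q1 ≤ Q0) ∧
            ∃ u1 : (GaussianInt ⧸ Ideal.span {q1 ^ 2})ˣ,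
              m = Nat.card {p : Σ q2 : GaussianInt, (GaussianInt ⧸ Ideal.span {q2 ^ 2})ˣ //
                    Q0 / Real.sqrt 2 < gN p.1 ∧ gN p.1 ≤ Q0 ∧
                    gN (rep q1 u1 * p.1 ^ 2 - rep p.1 p.2 * q1 ^ 2)
                      ≤ 2 * N⁻¹ * (gN q1) ^ 2 * (gN p.1) ^ 2}} = A at hbd ⊢
    rcases A.eq_empty_or_nonempty with rfl | hne
    · rw [csSup_empty]
      simp only [bot_eq_zero, Nat.cast_zero]
      positivity
    · exact hbd _ (Nat.sSup_mem hne ⟨_, fun m hm => Nat.le_floor (hbd m hm)⟩)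
  have h1 : 1134 * (M / Q0) = 2268 * (Q0 ^ 3 / N) := by
    rw [hMdef]; field_simp; norm_num
  have h2 : √(4 * (D * (4 * Q0 ^ 2) ^ ε * (297 * (45 * M)))) = E * (Q0 ^ ε * (Q0 ^ 2 / √N)) := by
    have e1 : (4 * Q0 ^ 2) ^ ε = 4 ^ ε * (Q0 ^ ε) ^ 2 := by
      rw [Real.mul_rpow (by norm_num) (by positivity), ← Real.rpow_natCast, ← Real.rpow_natCast,
        ← Real.rpow_mul hQ0.le, ← Real.rpow_mul hQ0.le, mul_comm ε]
    have e2 : M = 2 * (Q0 ^ 2 / √N) ^ 2 := by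
      rw [div_pow, Real.sq_sqrt hN0.le, hMdef]; ring
    rw [e1, e2, hE, show 4 * (D * (4 ^ ε * (Q0 ^ ε) ^ 2) * (297 * (45 * (2 * (Q0 ^ 2 / √N) ^ 2))))
      = (4 * (D * (4 : ℝ) ^ ε * (297 * (45 * 2)))) * (Q0 ^ ε * (Q0 ^ 2 / √N)) ^ 2 by ring,
      Real.sqrt_mul (by positivity), Real.sqrt_sq (by positivity)]
  rw [h1, h2] at hKb
  have h3 : Q0 ^ ε ≤ (Q0 * N) ^ ε := Real.rpow_le_rpow hQ0.le (by nlinarith) hε.le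
  have h4 : Q0 ^ ε * (Q0 ^ 2 / √N) ≤
      (Q0 * N) ^ ε * (Q0 ^ 2 / √N + Q0 ^ ((1 : ℝ) / 2)) := by
    apply mul_le_mul h3 _ (by positivity) (by positivity)
    have : 0 ≤ Q0 ^ ((1 : ℝ) / 2) := by positivity
    linarith
  have h5 : 0 ≤ Q0 ^ 3 / N := by positivity
  have h6 : 0 ≤ (Q0 * N) ^ ε * (Q0 ^ 2 / √N + Q0 ^ ((1 : ℝ) / 2)) := by positivity
  have h7 : 0 ≤ E := Real.sqrt_nonneg _
  nlinarith [mul_le_mul_of_nonneg_left h4 h7, mul_nonneg h7 h5]
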